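/- arXiv:1605.04949 — 3 statements merged into one kernel-verified Lean document; each statement's English description precedes it below -/
import Mathlib

section
/- Two trades T₁ and T₂ are incompatible if and only if σ(T₁) ≠ σ(T₂), |ℓ(T₁)| ≤ |w(T₂)|, and |ℓ(T₂)| ≤ |w(T₁)|. -/
/-- A trade: opening price, winning price, losing price, size. -/
structure Trade where
  op : ℤ
  win : ℤ
  lose : ℤ
  size : ℚ
  deriving DecidableEq

/-- A buy: `w(T) > o(T) > ℓ(T)` and `w(T) > 0 > ℓ(T)`. -/
def Trade.IsBuy (T : Trade) : Prop :=
  T.win > T.op ∧ T.op > T.lose ∧ T.win > 0 ∧ 0 > T.lose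

/-- A sell: `w(T) < o(T) < ℓ(T)` and `w(T) < 0 < ℓ(T)`. -/
def Trade.IsSell (T : Trade) : Prop :=
  T.win < T.op ∧ T.op < T.lose ∧ T.win < 0 ∧ 0 < T.lose

/-- A valid trade has positive size and is either a buy or a sell. -/
def Trade.Valid (T : Trade) : Prop := 0 < T.size ∧ (T.IsBuy ∨ T.IsSell)

/-- The sign of a trade: `1` for a buy, `-1` for a sell. -/
def Trade.sign (T : Trade) : ℤ := if T.op < T.win then 1 else -1

/-- A price path starting at `p`: a nonempty finite sequence of integer prices whose
first element is `p` and in which consecutive prices differ by exactly 1. -/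
def IsPricePath (p : ℤ) (M : List ℤ) : Prop :=
  M ≠ [] ∧ M.head? = some p ∧ M.Chain' (fun a b => b = a + 1 ∨ b = a - 1)

/-- A price movement is a price path starting at `0`. -/
def IsPriceMovement (M : List ℤ) : Prop := IsPricePath 0 M

/-- `w` is reached by `M`, and is reached before `l` is. -/
def ReachesFirst (w l : ℤ) (M : List ℤ) : Prop :=
  ∃ i : Fin M.length, M.get i = w ∧ ∀ j : Fin M.length, (j : ℕ) < (i : ℕ) → M.get j ≠ l

/-- `T` is won by `M`: the winning price is reached first. -/
def Trade.Wins (T : Trade) (M : List ℤ) : Prop := ReachesFirst T.win T.lose M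

/-- `T` is lost by `M`: the losing price is reached first. -/
def Trade.Loses (T : Trade) (M : List ℤ) : Prop := ReachesFirst T.lose T.win M

/-- `M` closes `T`: it reaches at least one of the winning/losing prices. -/
def Trade.ClosedBy (T : Trade) (M : List ℤ) : Prop := T.win ∈ M ∨ T.lose ∈ M

open Classical in
/-- The closing price of `T` under `M`: whichever of `w(T)`, `ℓ(T)` is reached first. -/
noncomputable def Trade.closePrice (T : Trade) (M : List ℤ) : ℤ :=
  if T.Wins M then T.win else T.lose

/-- The broker's profit from `T` under `M`: `σ(T)·(close(T,M) − o(T))·s(T)`. -/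
noncomputable def Trade.profit (T : Trade) (M : List ℤ) : ℚ :=
  ((T.sign * (T.closePrice M - T.op) : ℤ) : ℚ) * T.size

/-- A set of trades is compatible if some price movement closes all of them
and wins all of them. -/
def Compatible (S : Set Trade) : Prop :=
  ∃ M : List ℤ, IsPriceMovement M ∧ (∀ T ∈ S, T.ClosedBy M) ∧ ∀ T ∈ S, T.Wins M

/-- A price path passes through every price between its start `0` and any later value. -/
theorem IsPriceMovement.exists_getElem_eq {M : List ℤ} (hM : IsPriceMovement M) {u : ℤ} (i : ℕ)
    (hi : i < M.length) (hu : 0 ≤ u ∧ u ≤ M[i] ∨ M[i] ≤ u ∧ u ≤ 0) :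
    ∃ k, ∃ hk : k < M.length, k ≤ i ∧ M[k] = u := by
  obtain ⟨-, hhead, hchain⟩ := hM
  induction i with
  | zero =>
    have h0 : M[0] = 0 := by
      rw [List.head?_eq_getElem?, List.getElem?_eq_getElem hi] at hhead
      exact Option.some.inj hhead
    exact ⟨0, hi, le_rfl, by omega⟩
  | succ i ih =>
    by_cases huv : M[i + 1] = u
    · exact ⟨i + 1, hi, le_rfl, huv⟩
    · have hstep := List.isChain_iff_getElem.mp hchain i hi
      obtain ⟨k, hk, hki, hku⟩ := ih (by omega) (by omega)
      exact ⟨k, hk, by omega, hku⟩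

/-- The first `n + 1` prices of the path that moves `a` steps away from `0` against the
direction `s`, and in direction `s` from then on. -/
def zigzag (s : ℤ) (a n : ℕ) : List ℤ :=
  (List.range (n + 1)).map fun k : ℕ => s * (|(k : ℤ) - a| - a)

theorem isPriceMovement_zigzag {s : ℤ} (hs : s = 1 ∨ s = -1) (a n : ℕ) :
    IsPriceMovement (zigzag s a n) := by
  refine ⟨by simp [zigzag], by simp [zigzag, List.head?_range], ?_⟩
  refine List.isChain_iff_getElem.mpr fun i hi => ?_
  simp only [zigzag, List.getElem_map, List.getElem_range]
  rcases hs with rfl | rfl <;> push_cast <;> grind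

theorem reachesFirst_zigzag {s : ℤ} {a n : ℕ} {w l : ℤ} (k : ℕ) (hk : k ≤ n)
    (hw : s * (|(k : ℤ) - a| - a) = w)
    (hl : ∀ j : ℕ, j < k → s * (|(j : ℤ) - a| - a) ≠ l) :
    ReachesFirst w l (zigzag s a n) := by
  refine ⟨⟨k, by simp [zigzag]; omega⟩, by simpa [zigzag] using hw, fun j hj => ?_⟩
  rw [List.get_eq_getElem]
  simpa [zigzag] using hl j hj

theorem ReachesFirst.mem {w l : ℤ} {M : List ℤ} (h : ReachesFirst w l M) : w ∈ M := by
  obtain ⟨i, rfl, -⟩ := h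
  exact List.get_mem M i

theorem compatible_pair_iff (T₁ T₂ : Trade) :
    Compatible {T₁, T₂} ↔ ∃ M, IsPriceMovement M ∧ T₁.Wins M ∧ T₂.Wins M := by
  constructor
  · rintro ⟨M, hM, -, hwin⟩
    exact ⟨M, hM, hwin T₁ (by simp), hwin T₂ (by simp)⟩
  · rintro ⟨M, hM, hwin₁, hwin₂⟩
    refine ⟨M, hM, ?_, ?_⟩
    · rintro T (rfl | rfl)
      exacts [Or.inl hwin₁.mem, Or.inl hwin₂.mem]
    · rintro T (rfl | rfl)
      exacts [hwin₁, hwin₂]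

theorem Trade.IsBuy.compatible {T₁ T₂ : Trade} (h₁ : T₁.IsBuy) (h₂ : T₂.IsBuy) :
    Compatible {T₁, T₂} := by
  obtain ⟨-, -, hw₁, hl₁⟩ := h₁
  obtain ⟨-, -, hw₂, hl₂⟩ := h₂
  refine (compatible_pair_iff T₁ T₂).mpr ⟨zigzag 1 0 (T₁.win.toNat + T₂.win.toNat),
    isPriceMovement_zigzag (Or.inl rfl) _ _,
    reachesFirst_zigzag T₁.win.toNat (by omega) ?_ ?_,
    reachesFirst_zigzag T₂.win.toNat (by omega) ?_ ?_⟩ <;> grind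

theorem Trade.IsSell.compatible {T₁ T₂ : Trade} (h₁ : T₁.IsSell) (h₂ : T₂.IsSell) :
    Compatible {T₁, T₂} := by
  obtain ⟨-, -, hw₁, hl₁⟩ := h₁
  obtain ⟨-, -, hw₂, hl₂⟩ := h₂
  refine (compatible_pair_iff T₁ T₂).mpr
    ⟨zigzag (-1) 0 ((-T₁.win).toNat + (-T₂.win).toNat),
    isPriceMovement_zigzag (Or.inr rfl) _ _,
    reachesFirst_zigzag (-T₁.win).toNat (by omega) ?_ ?_,
    reachesFirst_zigzag (-T₂.win).toNat (by omega) ?_ ?_⟩ <;> grind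

/-- A buy and a sell are compatible iff one of them can be won before the other is lost. -/
theorem Trade.IsBuy.compatible_isSell_iff {B S : Trade} (hB : B.IsBuy) (hS : S.IsSell) :
    Compatible {B, S} ↔ B.lose < S.win ∨ B.win < S.lose := by
  obtain ⟨-, -, hwB, hlB⟩ := hB
  obtain ⟨-, -, hwS, hlS⟩ := hS
  rw [compatible_pair_iff]
  constructor
  · rintro ⟨M, hM, ⟨i, hi, hiB⟩, ⟨j, hj, hjS⟩⟩
    by_contra! hcon
    rw [List.get_eq_getElem] at hi hj
    rcases lt_trichotomy (i : ℕ) j with hij | hij | hij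
    · obtain ⟨k, hk, hki, hkl⟩ :=
        hM.exists_getElem_eq (u := S.lose) i i.isLt (by omega)
      exact hjS ⟨k, hk⟩ (by simp only; omega) hkl
    · simp only [hij] at hi
      omega
    · obtain ⟨k, hk, hkj, hkl⟩ :=
        hM.exists_getElem_eq (u := B.lose) j j.isLt (by omega)
      exact hiB ⟨k, hk⟩ (by simp only; omega) hkl
  · rintro (h | h)
    · refine ⟨zigzag 1 (-S.win).toNat (B.win.toNat + 2 * (-S.win).toNat),
        isPriceMovement_zigzag (Or.inl rfl) _ _,
        reachesFirst_zigzag (B.win.toNat + 2 * (-S.win).toNat) le_rfl ?_ ?_,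
        reachesFirst_zigzag (-S.win).toNat (by omega) ?_ ?_⟩ <;> grind
    · refine ⟨zigzag (-1) B.win.toNat ((-S.win).toNat + 2 * B.win.toNat),
        isPriceMovement_zigzag (Or.inr rfl) _ _,
        reachesFirst_zigzag B.win.toNat (by omega) ?_ ?_,
        reachesFirst_zigzag ((-S.win).toNat + 2 * B.win.toNat) le_rfl ?_ ?_⟩ <;> grind

theorem Trade.IsBuy.sign_eq {T : Trade} (h : T.IsBuy) : T.sign = 1 :=
  if_pos h.1

theorem Trade.IsSell.sign_eq {T : Trade} (h : T.IsSell) : T.sign = -1 :=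
  if_neg h.1.not_gt

/-- The criterion for a buy and a sell, with absolute values. -/
theorem Trade.IsBuy.not_compatible_isSell_iff {B S : Trade} (hB : B.IsBuy) (hS : S.IsSell) :
    ¬ Compatible {B, S} ↔ |B.lose| ≤ |S.win| ∧ |S.lose| ≤ |B.win| := by
  rw [hB.compatible_isSell_iff hS]
  obtain ⟨-, -, hwB, hlB⟩ := hB
  obtain ⟨-, -, hwS, hlS⟩ := hS
  rw [abs_of_neg hlB, abs_of_neg hwS, abs_of_pos hlS, abs_of_pos hwB]
  omega

/-- Two trades `T₁` and `T₂` are incompatible if and only if `σ(T₁) ≠ σ(T₂)`,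
`|ℓ(T₁)| ≤ |w(T₂)|`, and `|ℓ(T₂)| ≤ |w(T₁)|`. -/
theorem pair_incompatible_iff (T₁ T₂ : Trade) (h₁ : T₁.Valid) (h₂ : T₂.Valid) :
    ¬ Compatible {T₁, T₂} ↔
      (T₁.sign ≠ T₂.sign ∧ |T₁.lose| ≤ |T₂.win| ∧ |T₂.lose| ≤ |T₁.win|) := by
  rcases h₁.2 with hT₁ | hT₁ <;> rcases h₂.2 with hT₂ | hT₂
  · simp [hT₁.compatible hT₂, hT₁.sign_eq, hT₂.sign_eq]
  · simp [hT₁.not_compatible_isSell_iff hT₂, hT₁.sign_eq, hT₂.sign_eq]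
  · rw [Set.pair_comm, hT₂.not_compatible_isSell_iff hT₁, hT₁.sign_eq, hT₂.sign_eq]
    simp [and_comm]
  · simp [hT₁.compatible hT₂, hT₁.sign_eq, hT₂.sign_eq]
end

section
/- Let 𝒯 be a finite set of trades with a generalized profit function π̂, and assign to each trade T the weight f(T) = π̂_w(T) − π̂_ℓ(T). Then a subset 𝒯' ⊆ 𝒯 is an optimal set of winning trades (i.e., 𝒯' is compatible and maximizes ∑_{T ∈ 𝒯'} π̂_w(T) + ∑_{T ∈ 𝒯∖𝒯'} π̂_ℓ(T) over all compatible subsets of 𝒯) if and only if 𝒯' is a maximum f-weight independent set of the incompatibility graph G(𝒯) (i.e., 𝒯' is an independent set of G(𝒯) and ∑_{T ∈ 𝒯'} f(T) ≥ ∑_{T ∈ I} f(T) for every independent set I of G(𝒯)). -/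
/-- A generalized profit function: assigns to each trade a positive winning profit
`pw T` and a negative losing profit `pl T`. -/
structure ProfitFn where
  pw : Trade → ℚ
  pl : Trade → ℚ
  pw_pos : ∀ T, 0 < pw T
  pl_neg : ∀ T, pl T < 0

open Classical in
/-- The generalized profit of `T` under `M`: `pw T` if `T` is won, `pl T` if lost. -/
noncomputable def ProfitFn.profit (π : ProfitFn) (T : Trade) (M : List ℤ) : ℚ :=
  if T.Wins M then π.pw T else π.pl T

/-- `I` is an independent set of the incompatibility graph `G(𝒯)`: a subset of `𝒯`
no two distinct elements of which are incompatible (i.e. adjacent in `G(𝒯)`). -/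
def IsIndepSet (𝒯 I : Finset Trade) : Prop :=
  I ⊆ 𝒯 ∧ ∀ T₁ ∈ I, ∀ T₂ ∈ I, T₁ ≠ T₂ → Compatible {T₁, T₂}

theorem reachesFirst_cons {w l p : ℤ} {M : List ℤ} :
    ReachesFirst w l (p :: M) ↔ p = w ∨ (p ≠ l ∧ ReachesFirst w l M) := by
  constructor
  · rintro ⟨⟨i, hi⟩, hw, hl⟩
    cases i with
    | zero => exact Or.inl hw
    | succ i =>
      refine Or.inr ⟨hl ⟨0, by simp⟩ (Nat.succ_pos i),
        ⟨i, by simpa using hi⟩, hw, fun j hj => ?_⟩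
      exact hl ⟨j + 1, by simp⟩ (Nat.succ_lt_succ hj)
  · rintro (rfl | ⟨hp, ⟨i, hi⟩, hw, hl⟩)
    · exact ⟨⟨0, by simp⟩, rfl, fun j hj => absurd hj (Nat.not_lt_zero _)⟩
    · refine ⟨⟨i + 1, by simpa using hi⟩, hw, ?_⟩
      rintro ⟨j, hj⟩ hji
      cases j with
      | zero => exact hp
      | succ j => exact hl ⟨j, by simpa using hj⟩ (Nat.lt_of_succ_lt_succ hji)

theorem not_reachesFirst_nil {w l : ℤ} : ¬ ReachesFirst w l [] := by
  rintro ⟨i, -⟩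
  exact i.elim0

theorem IsPricePath.exists_eq_cons {p : ℤ} {M : List ℤ} (h : IsPricePath p M) :
    ∃ N, M = p :: N := by
  obtain ⟨-, hhead, -⟩ := h
  exact List.head?_eq_some_iff.mp hhead

theorem IsPricePath.cons {p q : ℤ} {M : List ℤ} (h : IsPricePath q M)
    (hpq : q = p + 1 ∨ q = p - 1) : IsPricePath p (p :: M) := by
  obtain ⟨N, rfl⟩ := h.exists_eq_cons
  exact ⟨by simp, rfl, List.isChain_cons_cons.mpr ⟨hpq, h.2.2⟩⟩

theorem isPricePath_singleton (p : ℤ) : IsPricePath p [p] :=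
  ⟨by simp, rfl, List.isChain_singleton p⟩

/-- A path from `q` can be extended backwards to a path from `p` which first moves
monotonically to `q`. -/
theorem IsPricePath.exists_extend {q : ℤ} {M : List ℤ} (h : IsPricePath q M) (p : ℤ) :
    ∃ M', IsPricePath p M' ∧ ∀ w l : ℤ, l ∉ Set.uIcc p q →
      ReachesFirst w l M → ReachesFirst w l M' := by
  induction hn : (q - p).natAbs generalizing p with
  | zero =>
    obtain rfl : q = p := by omega
    exact ⟨M, h, fun _ _ _ hM => hM⟩
  | succ n ih =>
    obtain ⟨r, hr, hrq, hmem⟩ : ∃ r : ℤ, (r = p + 1 ∨ r = p - 1) ∧ (q - r).natAbs = n ∧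
        Set.uIcc r q ⊆ Set.uIcc p q := by
      rcases lt_or_ge p q with hpq | hpq
      · refine ⟨p + 1, Or.inl rfl, by omega, fun x hx => ?_⟩
        rw [Set.mem_uIcc] at hx ⊢
        omega
      · refine ⟨p - 1, Or.inr rfl, by omega, fun x hx => ?_⟩
        rw [Set.mem_uIcc] at hx ⊢
        omega
    obtain ⟨M', hM', hreach⟩ := ih r hrq
    refine ⟨p :: M', hM'.cons hr, fun w l hl hM => reachesFirst_cons.mpr (Or.inr ⟨?_, ?_⟩)⟩
    · rintro rfl
      exact hl Set.left_mem_uIcc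
    · exact hreach w l (fun hx => hl (hmem hx)) hM

/-- A path starting strictly between the two losing prices cannot win both a buy and a sell
if each winning price lies beyond the losing price of the other trade. -/
theorem IsPricePath.not_reachesFirst_both {p w l w' l' : ℤ} {M : List ℤ}
    (hM : IsPricePath p M) (hl : w' ≤ l) (hlp : l < p) (hpl' : p < l') (hl' : l' ≤ w)
    (h : ReachesFirst w l M) (h' : ReachesFirst w' l' M) : False := by
  induction M generalizing p with
  | nil => exact not_reachesFirst_nil h
  | cons a N ih =>
    obtain ⟨N', hN'⟩ := hM.exists_eq_cons
    obtain ⟨rfl, rfl⟩ := List.cons.inj hN'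
    have hN := ((reachesFirst_cons.mp h).resolve_left (by omega)).2
    have hN' := ((reachesFirst_cons.mp h').resolve_left (by omega)).2
    cases N with
    | nil => exact not_reachesFirst_nil hN
    | cons b K =>
      obtain ⟨hstep, hchain⟩ := List.isChain_cons_cons.mp hM.2.2
      have hb := reachesFirst_cons.mp hN
      have hb' := reachesFirst_cons.mp hN'
      exact ih ⟨by simp, rfl, hchain⟩ (by omega) (by omega) hN hN'

theorem Compatible.mono {S S' : Set Trade} (h : Compatible S) (hS : S' ⊆ S) :
    Compatible S' := by
  obtain ⟨M, hM, hclosed, hwins⟩ := h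
  exact ⟨M, hM, fun T hT => hclosed T (hS hT), fun T hT => hwins T (hS hT)⟩

theorem Trade.IsBuy.lt_or_lt_of_compatible {B S : Trade} (hB : B.IsBuy) (hS : S.IsSell)
    (h : Compatible {B, S}) : B.win < S.lose ∨ B.lose < S.win := by
  obtain ⟨M, hM, -, hwins⟩ := h
  by_contra! hcon
  exact IsPricePath.not_reachesFirst_both hM hcon.2 hB.2.2.2 hS.2.2.2 hcon.1
    (hwins B (by simp)) (hwins S (by simp))

/-- Some trade of a nonempty set of pairwise compatible trades can be won before
any trade of the opposite direction is lost. -/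
theorem exists_trade_won_first {S : Finset Trade} (hne : S.Nonempty)
    (hdir : ∀ T ∈ S, T.IsBuy ∨ T.IsSell)
    (hpair : ∀ B ∈ S, ∀ T ∈ S, B.IsBuy → T.IsSell → B.win < T.lose ∨ B.lose < T.win) :
    ∃ T ∈ S, (∀ B ∈ S, B.IsBuy → B.lose < T.win) ∧
      ∀ R ∈ S, R.IsSell → T.win < R.lose := by
  classical
  by_cases hbuy : ∃ B ∈ S, B.IsBuy
  · obtain ⟨B, hB, hmin⟩ := (S.filter Trade.IsBuy).exists_min_image Trade.win
      (by simpa [Finset.Nonempty] using hbuy)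
    obtain ⟨hBS, hBbuy⟩ := Finset.mem_filter.mp hB
    by_cases hsell : ∀ R ∈ S, R.IsSell → B.win < R.lose
    · exact ⟨B, hBS, fun B' _ hB' => hB'.2.2.2.trans hBbuy.2.2.1, hsell⟩
    · push Not at hsell
      obtain ⟨R, hRS, hRsell, hle⟩ := hsell
      refine ⟨R, hRS, fun B' hB' hbuy' => ?_, fun R' _ hR' => hRsell.2.2.1.trans hR'.2.2.2⟩
      have := hmin B' (Finset.mem_filter.mpr ⟨hB', hbuy'⟩)
      exact (hpair B' hB' R hRS hbuy' hRsell).resolve_left (by omega)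
  · push Not at hbuy
    obtain ⟨T, hT⟩ := hne
    have hTsell := (hdir T hT).resolve_left (hbuy T hT)
    exact ⟨T, hT, fun B hB hB' => absurd hB' (hbuy B hB),
      fun R _ hR => hTsell.2.2.1.trans hR.2.2.2⟩

theorem exists_pricePath_wins (S : Finset Trade) (p : ℤ)
    (hdir : ∀ T ∈ S, T.IsBuy ∨ T.IsSell)
    (hpair : ∀ B ∈ S, ∀ T ∈ S, B.IsBuy → T.IsSell → B.win < T.lose ∨ B.lose < T.win)
    (hpbuy : ∀ B ∈ S, B.IsBuy → B.lose < p) (hpsell : ∀ R ∈ S, R.IsSell → p < R.lose) :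
    ∃ M, IsPricePath p M ∧ ∀ T ∈ S, T.Wins M := by
  induction S using Finset.strongInduction generalizing p with
  | H S ih =>
    rcases S.eq_empty_or_nonempty with rfl | hne
    · exact ⟨[p], isPricePath_singleton p, by simp⟩
    obtain ⟨T, hT, hTbuy, hTsell⟩ := exists_trade_won_first hne hdir hpair
    have hsub : ∀ R ∈ S.erase T, R ∈ S := fun R hR => Finset.mem_of_mem_erase hR
    obtain ⟨M, hM, hwins⟩ := ih (S.erase T) (Finset.erase_ssubset hT) T.win
      (fun R hR => hdir R (hsub R hR))
      (fun B hB R hR => hpair B (hsub B hB) R (hsub R hR))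
      (fun B hB => hTbuy B (hsub B hB)) (fun R hR => hTsell R (hsub R hR))
    obtain ⟨M', hM', hreach⟩ := hM.exists_extend p
    refine ⟨M', hM', fun R hR => hreach _ _ (fun hmem => ?_) ?_⟩
    · rw [Set.mem_uIcc] at hmem
      rcases hdir R hR with hbuy | hsell
      · have := hTbuy R hR hbuy
        have := hpbuy R hR hbuy
        omega
      · have := hTsell R hR hsell
        have := hpsell R hR hsell
        omega
    · by_cases hRT : R = T
      · obtain ⟨N, rfl⟩ := hM.exists_eq_cons
        exact reachesFirst_cons.mpr (Or.inl (by rw [hRT]))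
      · exact hwins R (Finset.mem_erase.mpr ⟨hRT, hR⟩)

theorem compatible_iff_isIndepSet {𝒯 S : Finset Trade} (hval : ∀ T ∈ 𝒯, T.Valid)
    (hS : S ⊆ 𝒯) : Compatible (↑S : Set Trade) ↔ IsIndepSet 𝒯 S := by
  constructor
  · refine fun h => ⟨hS, fun T₁ h₁ T₂ h₂ _ => h.mono ?_⟩
    rintro T (rfl | rfl)
    exacts [h₁, h₂]
  · rintro ⟨-, hpair⟩
    obtain ⟨M, hM, hwins⟩ := exists_pricePath_wins S 0 (fun T hT => (hval T (hS hT)).2)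
      (fun B hB R hR hbuy hsell => hbuy.lt_or_lt_of_compatible hsell
        (hpair B hB R hR (by
          rintro rfl
          exact lt_asymm hbuy.2.2.1 hsell.2.2.1)))
      (fun B _ hB => hB.2.2.2) (fun R _ hR => hR.2.2.2)
    exact ⟨M, hM, fun T hT => Or.inl (hwins T hT).mem, hwins⟩

theorem ProfitFn.sum_pw_add_sum_pl (π : ProfitFn) {𝒯 S : Finset Trade} (hS : S ⊆ 𝒯) :
    ∑ T ∈ S, π.pw T + ∑ T ∈ 𝒯 \ S, π.pl T
      = ∑ T ∈ S, (π.pw T - π.pl T) + ∑ T ∈ 𝒯, π.pl T := by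
  rw [← Finset.sum_sdiff hS (f := π.pl), Finset.sum_sub_distrib]
  ring

/-- With each trade weighted by `f(T) = π̂_w(T) − π̂_ℓ(T)`, a subset `𝒯' ⊆ 𝒯` is an
optimal set of winning trades (compatible, and maximizing the total profit
`∑_{T ∈ 𝒯'} π̂_w(T) + ∑_{T ∈ 𝒯∖𝒯'} π̂_ℓ(T)` among compatible subsets of `𝒯`) if and
only if `𝒯'` is a maximum `f`-weight independent set of the incompatibility graph `G(𝒯)`. -/
theorem optimal_winning_iff_max_weight_indep (π : ProfitFn)
    (𝒯 𝒯' : Finset Trade) (hval : ∀ T ∈ 𝒯, T.Valid) (hsub : 𝒯' ⊆ 𝒯) :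
    (Compatible (↑𝒯' : Set Trade) ∧
      ∀ S ⊆ 𝒯, Compatible (↑S : Set Trade) →
        ∑ T ∈ S, π.pw T + ∑ T ∈ 𝒯 \ S, π.pl T
          ≤ ∑ T ∈ 𝒯', π.pw T + ∑ T ∈ 𝒯 \ 𝒯', π.pl T)
    ↔ (IsIndepSet 𝒯 𝒯' ∧
      ∀ I : Finset Trade, IsIndepSet 𝒯 I →
        ∑ T ∈ I, (π.pw T - π.pl T) ≤ ∑ T ∈ 𝒯', (π.pw T - π.pl T)) := by
  rw [compatible_iff_isIndepSet hval hsub]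
  refine and_congr_right fun _ => ⟨fun h I hI => ?_, fun h S hS hcomp => ?_⟩
  · have := h I hI.1 ((compatible_iff_isIndepSet hval hI.1).mpr hI)
    rw [π.sum_pw_add_sum_pl hI.1, π.sum_pw_add_sum_pl hsub] at this
    exact le_of_add_le_add_right this
  · rw [π.sum_pw_add_sum_pl hS, π.sum_pw_add_sum_pl hsub]
    exact add_le_add_left (h S ((compatible_iff_isIndepSet hval hS).mp hcomp)) _
end

section
/- Let n ≥ 1 and let X₁, …, Xₙ be real numbers such that ∑_{i=1}^{n} i·Xᵢ > 0. Then for all real numbers a, c > 0, there exists m with 1 ≤ m ≤ n such that ∑_{i=1}^{m} (a + c·i)·i·Xᵢ > 0. -/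
/-- If the partial sums of `w i * y i` are nonpositive, where `w` is positive and monotone, then
`w n * ∑ y i ≤ ∑ w i * y i`. -/
theorem mul_sum_Icc_le_of_weighted_nonpos {w y : ℕ → ℝ} (hw : ∀ i, 0 < w i) (hmono : Monotone w)
    (n : ℕ) (hT : ∀ m, 1 ≤ m → m ≤ n → ∑ i ∈ Finset.Icc 1 m, w i * y i ≤ 0) :
    w n * ∑ i ∈ Finset.Icc 1 n, y i ≤ ∑ i ∈ Finset.Icc 1 n, w i * y i := by
  induction n with
  | zero => simp
  | succ k ih =>
    have hle := ih fun m h1 h2 => hT m h1 (h2.trans k.le_succ)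
    have hTk : ∑ i ∈ Finset.Icc 1 k, w i * y i ≤ 0 := by
      rcases Nat.eq_zero_or_pos k with rfl | hk
      · simp
      · exact hT k hk k.le_succ
    have hS : ∑ i ∈ Finset.Icc 1 k, y i ≤ 0 :=
      nonpos_of_mul_nonpos_right (hle.trans hTk) (hw k)
    rw [Finset.sum_Icc_succ_top (by omega), Finset.sum_Icc_succ_top (by omega), mul_add]
    gcongr
    exact (mul_le_mul_of_nonpos_right (hmono k.le_succ) hS).trans hle

/-- If `∑_{i=1}^{n} i·Xᵢ > 0`, then for all reals `a, c > 0` there exists `1 ≤ m ≤ n`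
such that `∑_{i=1}^{m} (a + c·i)·i·Xᵢ > 0`. -/
theorem exists_positive_weighted_partial_sum (n : ℕ) (hn : 1 ≤ n) (X : ℕ → ℝ)
    (h : 0 < ∑ i ∈ Finset.Icc 1 n, (i : ℝ) * X i)
    (a c : ℝ) (ha : 0 < a) (hc : 0 < c) :
    ∃ m, 1 ≤ m ∧ m ≤ n ∧ 0 < ∑ i ∈ Finset.Icc 1 m, (a + c * (i : ℝ)) * ((i : ℝ) * X i) := by
  by_contra! hT
  have hw : ∀ i : ℕ, 0 < a + c * (i : ℝ) := fun i => by positivity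
  have hmono : Monotone fun i : ℕ => a + c * (i : ℝ) := fun i j hij => by
    dsimp only
    gcongr
  have hle := mul_sum_Icc_le_of_weighted_nonpos (y := fun i => (i : ℝ) * X i) hw hmono n hT
  exact absurd (hle.trans (hT n hn le_rfl)) (mul_pos (hw n) h).not_ge
end
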